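/- Let (C, δ) and (D, ∂) be S¹-complexes over a commutative ring K and let κ = (κ₀, κ₁, …) be an S¹-equivariant chain map between them. If κ₀ : (C, δ₀) → (D, ∂₀) is a quasi-isomorphism, then the induced map κ^{S¹} : C⁻ → D⁻ induces an isomorphism on negative cyclic homology HC⁻_*(C) ≅ HC⁻_*(D); more generally, for every integer n the induced map H_*(uⁿC⁻, δ^{S¹}) → H_*(uⁿD⁻, ∂^{S¹}) is an isomorphism. -/

import Mathlib

open Finset DirectSum

set_option maxHeartbeats 1000000
set_option synthInstance.maxHeartbeats 1000000

noncomputable section Lib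

variable (K : Type) [CommRing K]

/-- Transport of graded components along an equality of degrees. -/
def pcast (F : ℤ → Type) [∀ n, AddCommGroup (F n)] [∀ n, Module K (F n)]
    {a b : ℤ} (h : a = b) : F a →ₗ[K] F b := by subst h; exact LinearMap.id

/-- Transport of graded components along an equality of degrees when it holds
(and the zero map otherwise). -/
def tr (F : ℤ → Type) [∀ n, AddCommGroup (F n)] [∀ n, Module K (F n)]
    (a b : ℤ) : F a →ₗ[K] F b := if h : a = b then pcast K F h else 0

variable (C : ℤ → Type) [∀ n, AddCommGroup (C n)] [∀ n, Module K (C n)]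
variable (D : ℤ → Type) [∀ n, AddCommGroup (D n)] [∀ n, Module K (D n)]
variable (E : ℤ → Type) [∀ n, AddCommGroup (E n)] [∀ n, Module K (E n)]

/-- An S¹-structure on a ℤ-graded `K`-module `C`: a sequence of operations
`δ i : Cⁿ → C^{n+1-2i}` with `∑_{i+j=k} δ i ∘ δ j = 0` for all `k ≥ 0`. -/
structure S1Struct where
  δ : (i : ℕ) → (n : ℤ) → C n →ₗ[K] C (n + 1 - 2 * (i : ℤ))
  rel : ∀ (k : ℕ) (n : ℤ) (x : C n),
    ∑ p ∈ antidiagonal k,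
      tr K C (n + 1 - 2 * (p.2 : ℤ) + 1 - 2 * (p.1 : ℤ)) (n + 2 - 2 * (k : ℤ))
        (δ p.1 (n + 1 - 2 * (p.2 : ℤ)) (δ p.2 n x)) = 0

/-- An S¹-equivariant chain map between S¹-complexes: a sequence of operations
`κ i : Cⁿ → D^{n-2i}` with `∑_{i+j=k} (κ i ∘ δ j - ∂ j ∘ κ i) = 0` for all `k ≥ 0`. -/
structure S1Map (S : S1Struct K C) (T : S1Struct K D) where
  κ : (i : ℕ) → (n : ℤ) → C n →ₗ[K] D (n - 2 * (i : ℤ))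
  rel : ∀ (k : ℕ) (n : ℤ) (x : C n),
    ∑ p ∈ antidiagonal k,
      (tr K D (n + 1 - 2 * (p.2 : ℤ) - 2 * (p.1 : ℤ)) (n + 1 - 2 * (k : ℤ))
          (κ p.1 (n + 1 - 2 * (p.2 : ℤ)) (S.δ p.2 n x))
        - tr K D (n - 2 * (p.1 : ℤ) + 1 - 2 * (p.2 : ℤ)) (n + 1 - 2 * (k : ℤ))
          (T.δ p.2 (n - 2 * (p.1 : ℤ)) (κ p.1 n x))) = 0

/-- An S¹-equivariant chain homotopy between two S¹-equivariant chain maps: a sequence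
of operations `h i : Cⁿ → D^{n-2i-1}` with
`κ k - κ' k = ∑_{i+j=k} (h i ∘ δ j + ∂ j ∘ h i)` for all `k ≥ 0`. -/
structure S1Homotopy {S : S1Struct K C} {T : S1Struct K D} (κ κ' : S1Map K C D S T) where
  h : (i : ℕ) → (n : ℤ) → C n →ₗ[K] D (n - 2 * (i : ℤ) - 1)
  rel : ∀ (k : ℕ) (n : ℤ) (x : C n),
    κ.κ k n x - κ'.κ k n x =
      ∑ p ∈ antidiagonal k,
        (tr K D (n + 1 - 2 * (p.2 : ℤ) - 2 * (p.1 : ℤ) - 1) (n - 2 * (k : ℤ))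
            (h p.1 (n + 1 - 2 * (p.2 : ℤ)) (S.δ p.2 n x))
          + tr K D (n - 2 * (p.1 : ℤ) - 1 + 1 - 2 * (p.2 : ℤ)) (n - 2 * (k : ℤ))
            (T.δ p.2 (n - 2 * (p.1 : ℤ) - 1) (h p.1 n x)))

/-- The degree `n` part of the negative cyclic complex `C⁻ = C[[u]]`:
formal power series `∑_{i ≥ 0} aᵢ uⁱ` with `aᵢ ∈ C^{n-2i}`. -/
abbrev NegCyc (n : ℤ) : Type := (i : ℕ) → C (n - 2 * (i : ℤ))

/-- The componentwise extension `(∑ uⁱ F i) (∑ aⱼ uʲ) = ∑_k (∑_{i+j=k} F i (aⱼ)) u^k`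
of a sequence of operations `F i` of degree `e - 2i` to the power series complexes. -/
def nExt (e : ℤ) (F : (i : ℕ) → (m : ℤ) → C m →ₗ[K] D (m + e - 2 * (i : ℤ))) (n t : ℤ) :
    NegCyc C n →ₗ[K] NegCyc D t where
  toFun x k := ∑ p ∈ antidiagonal k,
    tr K D (n - 2 * (p.2 : ℤ) + e - 2 * (p.1 : ℤ)) (t - 2 * (k : ℤ))
      (F p.1 (n - 2 * (p.2 : ℤ)) (x p.2))
  map_add' x y := by
    funext k
    simp [Finset.sum_add_distrib]
  map_smul' c x := by
    funext k
    simp [Finset.smul_sum]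

/-- The equivariant differential `δ^{S¹} = δ₀ + uδ₁ + u²δ₂ + ⋯` on `C⁻`. -/
def deltaNeg (S : S1Struct K C) (n : ℤ) : NegCyc C n →ₗ[K] NegCyc C (n + 1) :=
  nExt K C C 1 S.δ n (n + 1)

/-- The map `κ^{S¹} = κ₀ + uκ₁ + u²κ₂ + ⋯ : C⁻ → D⁻`. -/
def kappaNeg {S : S1Struct K C} {T : S1Struct K D} (κ : S1Map K C D S T) (n : ℤ) :
    NegCyc C n →ₗ[K] NegCyc D n :=
  nExt K C D 0 (fun i m => tr K D (m - 2 * (i : ℤ)) (m + 0 - 2 * (i : ℤ)) ∘ₗ κ.κ i m) n n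

/-- The map `H = h₀ + uh₁ + u²h₂ + ⋯ : C⁻ → D⁻[-1]`. -/
def homotopyNeg {S : S1Struct K C} {T : S1Struct K D} {κ κ' : S1Map K C D S T}
    (ht : S1Homotopy K C D κ κ') (n : ℤ) : NegCyc C n →ₗ[K] NegCyc D (n - 1) :=
  nExt K C D (-1) (fun i m => tr K D (m - 2 * (i : ℤ) - 1) (m + (-1) - 2 * (i : ℤ)) ∘ₗ ht.h i m)
    n (n - 1)

/-- The degree `n` part of the periodic complex `C^∧ = C((u))`, as a submodule of all
families `(aᵢ)_{i ∈ ℤ}` with `aᵢ ∈ C^{n-2i}`: those with `aᵢ = 0` for all sufficiently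
negative `i` (formal Laurent series). -/
def PerSub (n : ℤ) : Submodule K ((i : ℤ) → C (n - 2 * i)) where
  carrier := {x | ∃ N : ℤ, ∀ i < N, x i = 0}
  add_mem' := by
    rintro a b ⟨Na, ha⟩ ⟨Nb, hb⟩
    refine ⟨min Na Nb, fun i hi => ?_⟩
    have h1 := ha i (lt_of_lt_of_le hi (min_le_left _ _))
    have h2 := hb i (lt_of_lt_of_le hi (min_le_right _ _))
    show a i + b i = 0
    rw [h1, h2, add_zero]
  zero_mem' := ⟨0, fun _ _ => rfl⟩
  smul_mem' := by
    rintro c a ⟨N, hN⟩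
    refine ⟨N, fun i hi => ?_⟩
    show c • a i = 0
    rw [hN i hi, smul_zero]

/-- The degree `n` part of the periodic complex `C^∧ = C((u))`. -/
abbrev PerCyc (n : ℤ) : Type := ↥(PerSub K C n)

lemma natle_finite (m : ℤ) : Set.Finite {i : ℕ | (i : ℤ) ≤ m} := by
  apply Set.Finite.subset (Set.finite_Iic m.toNat)
  intro i hi
  simp only [Set.mem_setOf_eq] at hi
  simp only [Set.mem_Iic]
  omega

lemma uExt_sf (e : ℤ) (F : (i : ℕ) → (m : ℤ) → C m →ₗ[K] D (m + e - 2 * (i : ℤ))) (n t : ℤ)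
    (x : PerCyc K C n) (k : ℤ) :
    (Function.support fun i : ℕ =>
      tr K D (n - 2 * (k - (i : ℤ)) + e - 2 * (i : ℤ)) (t - 2 * k)
        (F i (n - 2 * (k - (i : ℤ))) (x.1 (k - (i : ℤ))))).Finite := by
  obtain ⟨N, hN⟩ := x.2
  apply Set.Finite.subset (natle_finite (k - N))
  intro i hi
  simp only [Function.mem_support] at hi
  simp only [Set.mem_setOf_eq]
  by_contra hcon
  push_neg at hcon
  rw [hN (k - (i : ℤ)) (by omega)] at hi
  simp at hi

/-- Componentwise extension of a sequence of operations `F i` of degree `e - 2i` to the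
Laurent series complexes: `(∑ aᵢ uⁱ) ↦ ∑_k (∑_{i≥0} F i (a_{k-i})) u^k`
(valued in the ambient product). -/
def uExtAux (e : ℤ) (F : (i : ℕ) → (m : ℤ) → C m →ₗ[K] D (m + e - 2 * (i : ℤ))) (n t : ℤ) :
    PerCyc K C n →ₗ[K] ((k : ℤ) → D (t - 2 * k)) where
  toFun x k := ∑ᶠ i : ℕ,
    tr K D (n - 2 * (k - (i : ℤ)) + e - 2 * (i : ℤ)) (t - 2 * k)
      (F i (n - 2 * (k - (i : ℤ))) (x.1 (k - (i : ℤ))))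
  map_add' x y := by
    funext k
    simp only [Pi.add_apply]
    rw [← finsum_add_distrib (uExt_sf K C D e F n t x k) (uExt_sf K C D e F n t y k)]
    apply finsum_congr
    intro i
    have hxy : (↑(x + y) : (i : ℤ) → C (n - 2 * i)) (k - (i : ℤ))
        = x.1 (k - (i : ℤ)) + y.1 (k - (i : ℤ)) := rfl
    rw [hxy, map_add, map_add]
  map_smul' c x := by
    funext k
    simp only [Pi.smul_apply, RingHom.id_apply]
    rw [smul_finsum' c (uExt_sf K C D e F n t x k)]
    apply finsum_congr
    intro i
    have hcx : (↑(c • x) : (i : ℤ) → C (n - 2 * i)) (k - (i : ℤ))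
        = c • x.1 (k - (i : ℤ)) := rfl
    rw [hcx, map_smul, map_smul]

@[simp] lemma uExtAux_apply (e : ℤ) (F : (i : ℕ) → (m : ℤ) → C m →ₗ[K] D (m + e - 2 * (i : ℤ)))
    (n t : ℤ) (x : PerCyc K C n) (k : ℤ) :
    uExtAux K C D e F n t x k = ∑ᶠ i : ℕ,
      tr K D (n - 2 * (k - (i : ℤ)) + e - 2 * (i : ℤ)) (t - 2 * k)
        (F i (n - 2 * (k - (i : ℤ))) (x.1 (k - (i : ℤ)))) := rfl

lemma uExtAux_mem (e : ℤ) (F : (i : ℕ) → (m : ℤ) → C m →ₗ[K] D (m + e - 2 * (i : ℤ)))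
    (n t : ℤ) (x : PerCyc K C n) : uExtAux K C D e F n t x ∈ PerSub K D t := by
  obtain ⟨N, hN⟩ := x.2
  refine ⟨N, fun k hk => ?_⟩
  rw [uExtAux_apply]
  apply finsum_eq_zero_of_forall_eq_zero
  intro i
  rw [hN (k - (i : ℤ)) (by omega)]
  simp

/-- Componentwise extension of a sequence of operations `F i` of degree `e - 2i` to the
complexes of formal Laurent series. -/
def uExt (e : ℤ) (F : (i : ℕ) → (m : ℤ) → C m →ₗ[K] D (m + e - 2 * (i : ℤ))) (n t : ℤ) :
    PerCyc K C n →ₗ[K] PerCyc K D t :=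
  LinearMap.codRestrict (PerSub K D t) (uExtAux K C D e F n t) (uExtAux_mem K C D e F n t)

@[simp] lemma uExt_coe_apply (e : ℤ) (F : (i : ℕ) → (m : ℤ) → C m →ₗ[K] D (m + e - 2 * (i : ℤ)))
    (n t : ℤ) (x : PerCyc K C n) (k : ℤ) :
    (uExt K C D e F n t x).1 k = ∑ᶠ i : ℕ,
      tr K D (n - 2 * (k - (i : ℤ)) + e - 2 * (i : ℤ)) (t - 2 * k)
        (F i (n - 2 * (k - (i : ℤ))) (x.1 (k - (i : ℤ)))) := rfl

/-- The equivariant differential `δ^{S¹} = δ₀ + uδ₁ + u²δ₂ + ⋯` on `C^∧ = C((u))`. -/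
def deltaPer (S : S1Struct K C) (n : ℤ) : PerCyc K C n →ₗ[K] PerCyc K C (n + 1) :=
  uExt K C C 1 S.δ n (n + 1)

/-- The map `κ^{S¹} = κ₀ + uκ₁ + u²κ₂ + ⋯ : C^∧ → D^∧`. -/
def kappaPer {S : S1Struct K C} {T : S1Struct K D} (κ : S1Map K C D S T) (n : ℤ) :
    PerCyc K C n →ₗ[K] PerCyc K D n :=
  uExt K C D 0 (fun i m => tr K D (m - 2 * (i : ℤ)) (m + 0 - 2 * (i : ℤ)) ∘ₗ κ.κ i m) n n

/-- The map `H = h₀ + uh₁ + u²h₂ + ⋯ : C^∧ → D^∧[-1]`. -/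
def homotopyPer {S : S1Struct K C} {T : S1Struct K D} {κ κ' : S1Map K C D S T}
    (ht : S1Homotopy K C D κ κ') (n : ℤ) : PerCyc K C n →ₗ[K] PerCyc K D (n - 1) :=
  uExt K C D (-1) (fun i m => tr K D (m - 2 * (i : ℤ) - 1) (m + (-1) - 2 * (i : ℤ)) ∘ₗ ht.h i m)
    n (n - 1)

/-- The submodule `u^m C⁻ ⊆ C^∧` of Laurent series supported in powers `≥ m`. -/
def uPow (m : ℤ) (n : ℤ) : Submodule K (PerCyc K C n) where
  carrier := {x | ∀ i < m, x.1 i = 0}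
  add_mem' := by
    intro a b ha hb i hi
    show a.1 i + b.1 i = 0
    rw [ha i hi, hb i hi, add_zero]
  zero_mem' := fun _ _ => rfl
  smul_mem' := by
    intro c a ha i hi
    show c • a.1 i = 0
    rw [ha i hi, smul_zero]

lemma uExt_mem_uPow (e : ℤ) (F : (i : ℕ) → (m : ℤ) → C m →ₗ[K] D (m + e - 2 * (i : ℤ)))
    (n t : ℤ) (m : ℤ) (x : PerCyc K C n) (hx : x ∈ uPow K C m n) :
    uExt K C D e F n t x ∈ uPow K D m t := by
  intro k hk
  rw [uExt_coe_apply]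
  apply finsum_eq_zero_of_forall_eq_zero
  intro i
  rw [hx (k - (i : ℤ)) (by omega)]
  simp

/-- The restriction of `δ^{S¹}` to the subcomplex `u^m C⁻ ⊆ C^∧`. -/
def deltaRes (S : S1Struct K C) (m n : ℤ) : ↥(uPow K C m n) →ₗ[K] ↥(uPow K C m (n + 1)) :=
  (deltaPer K C S n).restrict (fun x hx => uExt_mem_uPow K C C 1 S.δ n (n + 1) m x hx)

/-- The restriction of `κ^{S¹}` to the subcomplexes `u^m C⁻ → u^m D⁻`. -/
def kappaRes {S : S1Struct K C} {T : S1Struct K D} (κ : S1Map K C D S T) (m n : ℤ) :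
    ↥(uPow K C m n) →ₗ[K] ↥(uPow K D m n) :=
  (kappaPer K C D κ n).restrict
    (fun x hx => uExt_mem_uPow K C D 0
      (fun i m => tr K D (m - 2 * (i : ℤ)) (m + 0 - 2 * (i : ℤ)) ∘ₗ κ.κ i m) n n m x hx)

/-- The degree `n` part of the quotient complex `C⁺ = C^∧ / uC⁻`. -/
abbrev QtC (n : ℤ) : Type := PerCyc K C n ⧸ uPow K C 1 n

/-- The operator on `C⁺ = C^∧/uC⁻` induced by `δ^{S¹}`. -/
def deltaPlus (S : S1Struct K C) (n : ℤ) : QtC K C n →ₗ[K] QtC K C (n + 1) :=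
  Submodule.mapQ _ _ (deltaPer K C S n)
    (fun x hx => uExt_mem_uPow K C C 1 S.δ n (n + 1) 1 x hx)

/-- The map `C⁺ → D⁺` induced by `κ^{S¹}`. -/
def kappaPlus {S : S1Struct K C} {T : S1Struct K D} (κ : S1Map K C D S T) (n : ℤ) :
    QtC K C n →ₗ[K] QtC K D n :=
  Submodule.mapQ _ _ (kappaPer K C D κ n)
    (fun x hx => uExt_mem_uPow K C D 0
      (fun i m => tr K D (m - 2 * (i : ℤ)) (m + 0 - 2 * (i : ℤ)) ∘ₗ κ.κ i m) n n 1 x hx)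

/-- The map `C⁺ → D⁺[-1]` induced by an S¹-equivariant chain homotopy. -/
def homotopyPlus {S : S1Struct K C} {T : S1Struct K D} {κ κ' : S1Map K C D S T}
    (ht : S1Homotopy K C D κ κ') (n : ℤ) : QtC K C n →ₗ[K] QtC K D (n - 1) :=
  Submodule.mapQ _ _ (homotopyPer K C D ht n)
    (fun x hx => uExt_mem_uPow K C D (-1)
      (fun i m => tr K D (m - 2 * (i : ℤ) - 1) (m + (-1) - 2 * (i : ℤ)) ∘ₗ ht.h i m)
      n (n - 1) 1 x hx)

/-- The homology in degree `n` of a cochain complex of `K`-modules given degreewise by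
`d n : F n → F (n+1)`: the kernel of `d n` modulo the image of `d (n-1)`. -/
abbrev HomologyOf (F : ℤ → Type) [∀ n, AddCommGroup (F n)] [∀ n, Module K (F n)]
    (d : (n : ℤ) → F n →ₗ[K] F (n + 1)) (n : ℤ) : Type :=
  ↥(LinearMap.ker (d n)) ⧸
    Submodule.comap (LinearMap.ker (d n)).subtype
      (LinearMap.range (pcast K F (show n - 1 + 1 = n by ring) ∘ₗ d (n - 1)))

/-- A chain map `f` between cochain complexes `(F, dF)` and `(G, dG)` induces an isomorphism
on homology in every degree: for every `n` there is a bijective linear map between the homology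
groups sending the class of a cycle `x` to the class of the cycle `f n x`. -/
def InducesIso (F : ℤ → Type) [∀ n, AddCommGroup (F n)] [∀ n, Module K (F n)]
    (G : ℤ → Type) [∀ n, AddCommGroup (G n)] [∀ n, Module K (G n)]
    (dF : (n : ℤ) → F n →ₗ[K] F (n + 1)) (dG : (n : ℤ) → G n →ₗ[K] G (n + 1))
    (f : (n : ℤ) → F n →ₗ[K] G n) : Prop :=
  ∀ n : ℤ, ∃ φ : HomologyOf K F dF n →ₗ[K] HomologyOf K G dG n,
    Function.Bijective φ ∧
    ∀ (x : F n) (hx : x ∈ LinearMap.ker (dF n)) (hy : f n x ∈ LinearMap.ker (dG n)),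
      φ (Submodule.Quotient.mk ⟨x, hx⟩) = Submodule.Quotient.mk ⟨f n x, hy⟩

/-- The differential `δ₀` of an S¹-complex, as a degree `+1` operator. -/
def d0 (S : S1Struct K C) (n : ℤ) : C n →ₗ[K] C (n + 1) :=
  tr K C (n + 1 - 2 * ((0 : ℕ) : ℤ)) (n + 1) ∘ₗ S.δ 0 n

/-- The leading term `κ₀` of an S¹-equivariant chain map, as a degree `0` operator. -/
def k0 {S : S1Struct K C} {T : S1Struct K D} (κ : S1Map K C D S T) (n : ℤ) :
    C n →ₗ[K] D n :=
  tr K D (n - 2 * ((0 : ℕ) : ℤ)) n ∘ₗ κ.κ 0 n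

/-- The degree `d` part of the truncated complex `C⟨m,n⟩ = uⁿC⁻/u^mC⁻`: families
`(a_p)_{n ≤ p ≤ m-1}` with `a_p ∈ C^{d-2p}`, realized as families over `ℤ`
vanishing outside `[n, m-1]`. -/
def truncSub (m n d : ℤ) : Submodule K ((p : ℤ) → C (d - 2 * p)) where
  carrier := {a | ∀ p : ℤ, (p < n ∨ m ≤ p) → a p = 0}
  add_mem' := by
    intro a b ha hb p hp
    show a p + b p = 0
    rw [ha p hp, hb p hp, add_zero]
  zero_mem' := fun _ _ => rfl
  smul_mem' := by
    intro c a ha p hp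
    show c • a p = 0
    rw [ha p hp, smul_zero]

/-- The differential of the truncated complex `C⟨m,n⟩`, with components
`(δ^{S¹}x)_q = ∑_{i ≥ 0, q-i ≥ n} δᵢ(x_{q-i})` for `n ≤ q ≤ m-1`
(valued in the ambient product). -/
def truncDAux (S : S1Struct K C) (m n d : ℤ) :
    ↥(truncSub K C m n d) →ₗ[K] ((q : ℤ) → C (d + 1 - 2 * q)) where
  toFun x q :=
    if n ≤ q ∧ q < m then
      ∑ i ∈ Finset.range ((q - n).toNat + 1),
        tr K C (d - 2 * (q - (i : ℤ)) + 1 - 2 * (i : ℤ)) (d + 1 - 2 * q)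
          (S.δ i (d - 2 * (q - (i : ℤ))) (x.1 (q - (i : ℤ))))
    else 0
  map_add' x y := by
    funext q
    by_cases h : n ≤ q ∧ q < m
    · simp only [Pi.add_apply, if_pos h]
      rw [← Finset.sum_add_distrib]
      apply Finset.sum_congr rfl
      intro i _
      have hxy : (↑(x + y) : (p : ℤ) → C (d - 2 * p)) (q - (i : ℤ))
          = x.1 (q - (i : ℤ)) + y.1 (q - (i : ℤ)) := rfl
      rw [hxy, map_add, map_add]
    · simp only [Pi.add_apply, if_neg h, add_zero]
  map_smul' c x := by
    funext q
    by_cases h : n ≤ q ∧ q < m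
    · simp only [Pi.smul_apply, RingHom.id_apply, if_pos h]
      rw [Finset.smul_sum]
      apply Finset.sum_congr rfl
      intro i _
      have hcx : (↑(c • x) : (p : ℤ) → C (d - 2 * p)) (q - (i : ℤ))
          = c • x.1 (q - (i : ℤ)) := rfl
      rw [hcx, map_smul, map_smul]
    · simp only [Pi.smul_apply, RingHom.id_apply, if_neg h, smul_zero]

@[simp] lemma truncDAux_apply (S : S1Struct K C) (m n d : ℤ) (x : ↥(truncSub K C m n d))
    (q : ℤ) : truncDAux K C S m n d x q =
    if n ≤ q ∧ q < m then
      ∑ i ∈ Finset.range ((q - n).toNat + 1),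
        tr K C (d - 2 * (q - (i : ℤ)) + 1 - 2 * (i : ℤ)) (d + 1 - 2 * q)
          (S.δ i (d - 2 * (q - (i : ℤ))) (x.1 (q - (i : ℤ))))
    else 0 := rfl

lemma truncDAux_mem (S : S1Struct K C) (m n d : ℤ) (x : ↥(truncSub K C m n d)) :
    truncDAux K C S m n d x ∈ truncSub K C m n (d + 1) := by
  intro q hq
  rw [truncDAux_apply, if_neg (by omega)]

/-- The differential of the truncated complex `C⟨m,n⟩ = uⁿC⁻/u^mC⁻`. -/
def truncD (S : S1Struct K C) (m n d : ℤ) :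
    ↥(truncSub K C m n d) →ₗ[K] ↥(truncSub K C m n (d + 1)) :=
  LinearMap.codRestrict _ (truncDAux K C S m n d) (truncDAux_mem K C S m n d)

/-- The chain map `κ⟨m,n⟩ : C⟨m,n⟩ → D⟨m,n⟩` induced by an S¹-equivariant chain map,
with components `(κ⟨m,n⟩x)_q = ∑_{i ≥ 0, q-i ≥ n} κᵢ(x_{q-i})`
(valued in the ambient product). -/
def truncKAux {S : S1Struct K C} {T : S1Struct K D} (κ : S1Map K C D S T) (m n d : ℤ) :
    ↥(truncSub K C m n d) →ₗ[K] ((q : ℤ) → D (d - 2 * q)) where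
  toFun x q :=
    if n ≤ q ∧ q < m then
      ∑ i ∈ Finset.range ((q - n).toNat + 1),
        tr K D (d - 2 * (q - (i : ℤ)) - 2 * (i : ℤ)) (d - 2 * q)
          (κ.κ i (d - 2 * (q - (i : ℤ))) (x.1 (q - (i : ℤ))))
    else 0
  map_add' x y := by
    funext q
    by_cases h : n ≤ q ∧ q < m
    · simp only [Pi.add_apply, if_pos h]
      rw [← Finset.sum_add_distrib]
      apply Finset.sum_congr rfl
      intro i _
      have hxy : (↑(x + y) : (p : ℤ) → C (d - 2 * p)) (q - (i : ℤ))
          = x.1 (q - (i : ℤ)) + y.1 (q - (i : ℤ)) := rfl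
      rw [hxy, map_add, map_add]
    · simp only [Pi.add_apply, if_neg h, add_zero]
  map_smul' c x := by
    funext q
    by_cases h : n ≤ q ∧ q < m
    · simp only [Pi.smul_apply, RingHom.id_apply, if_pos h]
      rw [Finset.smul_sum]
      apply Finset.sum_congr rfl
      intro i _
      have hcx : (↑(c • x) : (p : ℤ) → C (d - 2 * p)) (q - (i : ℤ))
          = c • x.1 (q - (i : ℤ)) := rfl
      rw [hcx, map_smul, map_smul]
    · simp only [Pi.smul_apply, RingHom.id_apply, if_neg h, smul_zero]

lemma truncKAux_mem {S : S1Struct K C} {T : S1Struct K D} (κ : S1Map K C D S T)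
    (m n d : ℤ) (x : ↥(truncSub K C m n d)) :
    truncKAux K C D κ m n d x ∈ truncSub K D m n d := by
  intro q hq
  show (if n ≤ q ∧ q < m then _ else 0) = 0
  rw [if_neg (by omega)]

/-- The chain map `κ⟨m,n⟩ : C⟨m,n⟩ → D⟨m,n⟩` induced by an S¹-equivariant chain map. -/
def truncK {S : S1Struct K C} {T : S1Struct K D} (κ : S1Map K C D S T) (m n d : ℤ) :
    ↥(truncSub K C m n d) →ₗ[K] ↥(truncSub K D m n d) :=
  LinearMap.codRestrict _ (truncKAux K C D κ m n d) (truncKAux_mem K C D κ m n d)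

end Lib

/-! Form the mapping cone: a chain map is a quasi-isomorphism exactly when every cycle of its cone
is a boundary. On `u^m C⁻` and `u^m D⁻` the powers of `u` define a complete Hausdorff filtration,
and the leading coefficient of a cycle of the cone of `κ^{S¹}` is a cycle of the cone of `κ₀`. Since
the latter is a boundary, every cycle of the cone of `κ^{S¹}` can be corrected by a boundary so as
to raise its order in `u`; summing the corrections exhibits it as a boundary. Finally `C⁻` is the
complex `u⁰C⁻`. -/

section Transport

variable {K : Type} [CommRing K]
  {C : ℤ → Type} [∀ n, AddCommGroup (C n)] [∀ n, Module K (C n)]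
  {D : ℤ → Type} [∀ n, AddCommGroup (D n)] [∀ n, Module K (D n)]

lemma tr_self (a : ℤ) (x : C a) : tr K C a a x = x := by
  simp only [tr, pcast, dite_true, LinearMap.id_apply]

lemma tr_tr {a b : ℤ} (h : a = b) (c : ℤ) (x : C a) :
    tr K C b c (tr K C a b x) = tr K C a c x := by
  subst h
  rw [tr_self]

lemma tr_map_tr {φ : ℤ → ℤ} (F : (m : ℤ) → C m →ₗ[K] D (φ m)) {a b : ℤ} (h : a = b) (c : ℤ)
    (x : C a) : tr K D (φ b) c (F b (tr K C a b x)) = tr K D (φ a) c (F a x) := by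
  subst h
  rw [tr_self]

end Transport

section Filtration

variable {R A B Z : Type*} [Ring R] [AddCommGroup A] [Module R A] [AddCommGroup B] [Module R B]
  [AddCommGroup Z] [Module R Z]

/-- Completeness of a module for the topology of a filtration by submodules, in terms of sequences
whose `p`-th increment lies in the `p`-th step. The filtration is not assumed to be Hausdorff, so
limits need not be unique. -/
def IsCompleteFiltration (FA : ℕ → Submodule R A) : Prop :=
  ∀ s : ℕ → A, (∀ p, s (p + 1) - s p ∈ FA p) → ∃ l, ∀ p, l - s p ∈ FA p

lemma IsCompleteFiltration.prod {FA : ℕ → Submodule R A} {FB : ℕ → Submodule R B}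
    (hA : IsCompleteFiltration FA) (hB : IsCompleteFiltration FB) :
    IsCompleteFiltration fun p => (FA p).prod (FB p) := by
  intro s hs
  obtain ⟨a, ha⟩ := hA (fun p => (s p).1) fun p => (hs p).1
  obtain ⟨b, hb⟩ := hB (fun p => (s p).2) fun p => (hs p).2
  exact ⟨(a, b), fun p => ⟨ha p, hb p⟩⟩

theorem exists_mem_map_eq_of_isCompleteFiltration {α : A →ₗ[R] B} {β : B →ₗ[R] Z}
    {FA : ℕ → Submodule R A} {FB : ℕ → Submodule R B} (hβα : ∀ a, β (α a) = 0)
    (hα : ∀ p, ∀ a ∈ FA p, α a ∈ FB p) (hcomplete : IsCompleteFiltration FA)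
    (hsep : ∀ b, (∀ p, b ∈ FB p) → b = 0)
    (happrox : ∀ p, ∀ b ∈ FB p, β b = 0 → ∃ a ∈ FA p, b - α a ∈ FB (p + 1))
    {b : B} (hb : b ∈ FB 0) (hβb : β b = 0) : ∃ a ∈ FA 0, α a = b := by
  have hstep : ∀ p a, b - α a ∈ FB p → ∃ a' ∈ FA p, b - α (a + a') ∈ FB (p + 1) := by
    intro p a ha
    obtain ⟨a', ha', h⟩ := happrox p _ ha (by rw [map_sub, hβα, hβb, sub_zero])
    exact ⟨a', ha', by rwa [map_add, ← sub_sub]⟩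
  choose! corr hcorr hnext using hstep
  let s : ℕ → A := Nat.rec 0 fun p a => a + corr p a
  have hs0 : s 0 = 0 := rfl
  have hs : ∀ p, b - α (s p) ∈ FB p := by
    intro p
    induction p with
    | zero => rwa [hs0, map_zero, sub_zero]
    | succ p ih => exact hnext p _ ih
  obtain ⟨l, hl⟩ := hcomplete s fun p => by
    simpa only [s, add_sub_cancel_left] using hcorr p _ (hs p)
  refine ⟨l, by simpa only [hs0, sub_zero] using hl 0, (sub_eq_zero.1 (hsep _ fun p => ?_)).symm⟩
  have hsplit : b - α l = (b - α (s p)) - α (l - s p) := by rw [map_sub]; abel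
  rw [hsplit]
  exact (FB p).sub_mem (hs p) (hα p _ (hl p))

end Filtration

section Homology

variable {K : Type} [CommRing K]
  {F : ℤ → Type} [∀ n, AddCommGroup (F n)] [∀ n, Module K (F n)]
  {G : ℤ → Type} [∀ n, AddCommGroup (G n)] [∀ n, Module K (G n)]

lemma range_pcast_comp (d : (n : ℤ) → F n →ₗ[K] F (n + 1)) {a b : ℤ} (h : b + 1 = a + 1) :
    LinearMap.range (pcast K F h ∘ₗ d b) = LinearMap.range (d a) := by
  obtain rfl : b = a := by omega
  rfl

lemma homologyOf_mk_eq_zero_iff {d : (n : ℤ) → F n →ₗ[K] F (n + 1)} {a : ℤ}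
    {x : LinearMap.ker (d (a + 1))} :
    (Submodule.Quotient.mk x : HomologyOf K F d (a + 1)) = 0 ↔ x.1 ∈ LinearMap.range (d a) := by
  rw [Submodule.Quotient.mk_eq_zero, Submodule.mem_comap, range_pcast_comp (a := a)]
  rfl

variable {dF : (n : ℤ) → F n →ₗ[K] F (n + 1)} {dG : (n : ℤ) → G n →ₗ[K] G (n + 1)}
  {f : (n : ℤ) → F n →ₗ[K] G n}

lemma map_mem_ker_of_comm (hf : ∀ n x, f (n + 1) (dF n x) = dG n (f n x)) {n : ℤ} (x : F n)
    (hx : x ∈ LinearMap.ker (dF n)) : f n x ∈ LinearMap.ker (dG n) := by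
  rw [LinearMap.mem_ker, ← hf, LinearMap.mem_ker.1 hx, map_zero]

/-- The map induced on degree `n` homology by a chain map. -/
def homologyMap (hf : ∀ n x, f (n + 1) (dF n x) = dG n (f n x)) (n : ℤ) :
    HomologyOf K F dF n →ₗ[K] HomologyOf K G dG n :=
  Submodule.mapQ _ _ ((f n).restrict (map_mem_ker_of_comm hf)) <| by
    obtain ⟨a, rfl⟩ : ∃ a, n = a + 1 := ⟨n - 1, by ring⟩
    rw [range_pcast_comp (a := a), range_pcast_comp (a := a)]
    rintro ⟨x, _⟩ ⟨v, hv⟩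
    exact ⟨f a v, (hf a v).symm.trans (congrArg _ hv)⟩

variable (hf : ∀ n x, f (n + 1) (dF n x) = dG n (f n x))

lemma inducesIso_iff_bijective_homologyMap :
    InducesIso K F G dF dG f ↔ ∀ n, Function.Bijective (homologyMap hf n) := by
  refine forall_congr' fun n => ⟨?_, fun h => ⟨homologyMap hf n, h, fun _ _ _ => rfl⟩⟩
  rintro ⟨φ, hφ, hφmk⟩
  suffices φ = homologyMap hf n from this ▸ hφ
  refine LinearMap.ext fun q => ?_
  obtain ⟨⟨x, hx⟩, rfl⟩ := Submodule.Quotient.mk_surjective _ q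
  exact hφmk x hx (map_mem_ker_of_comm hf x hx)

lemma injective_homologyMap_iff {a : ℤ} :
    Function.Injective (homologyMap hf (a + 1)) ↔
      ∀ x, dF (a + 1) x = 0 → f (a + 1) x ∈ LinearMap.range (dG a) →
        x ∈ LinearMap.range (dF a) := by
  rw [injective_iff_map_eq_zero]
  refine ⟨fun h x hx hfx => ?_, fun h q hq => ?_⟩
  · exact homologyOf_mk_eq_zero_iff.1
      (h (Submodule.Quotient.mk ⟨x, hx⟩) (homologyOf_mk_eq_zero_iff.2 hfx))
  · obtain ⟨⟨x, hx⟩, rfl⟩ := Submodule.Quotient.mk_surjective _ q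
    exact homologyOf_mk_eq_zero_iff.2 (h x hx (homologyOf_mk_eq_zero_iff.1 hq))

lemma surjective_homologyMap_iff {a : ℤ} :
    Function.Surjective (homologyMap hf (a + 1)) ↔
      ∀ y, dG (a + 1) y = 0 →
        ∃ x, dF (a + 1) x = 0 ∧ f (a + 1) x - y ∈ LinearMap.range (dG a) := by
  refine ⟨fun h y hy => ?_, fun h q => ?_⟩
  · obtain ⟨q, hq⟩ := h (Submodule.Quotient.mk ⟨y, hy⟩)
    obtain ⟨⟨x, hx⟩, rfl⟩ := Submodule.Quotient.mk_surjective _ q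
    exact ⟨x, hx, homologyOf_mk_eq_zero_iff.1 (sub_eq_zero.2 hq)⟩
  · obtain ⟨⟨y, hy⟩, rfl⟩ := Submodule.Quotient.mk_surjective _ q
    obtain ⟨x, hx, hxy⟩ := h y hy
    exact ⟨Submodule.Quotient.mk ⟨x, hx⟩, sub_eq_zero.1 (homologyOf_mk_eq_zero_iff.2 hxy)⟩

end Homology

section Cone

variable {K : Type} [CommRing K]
  {F : ℤ → Type} [∀ n, AddCommGroup (F n)] [∀ n, Module K (F n)]
  {G : ℤ → Type} [∀ n, AddCommGroup (G n)] [∀ n, Module K (G n)]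
  {F' : ℤ → Type} [∀ n, AddCommGroup (F' n)] [∀ n, Module K (F' n)]
  {G' : ℤ → Type} [∀ n, AddCommGroup (G' n)] [∀ n, Module K (G' n)]

/-- The differential `(v, w) ↦ (-dv, f v + dw)` of the mapping cone of `f`, whose degree `n` part
is `Fⁿ⁺¹ × Gⁿ`. -/
def coneD (dF : (n : ℤ) → F n →ₗ[K] F (n + 1)) (dG : (n : ℤ) → G n →ₗ[K] G (n + 1))
    (f : (n : ℤ) → F n →ₗ[K] G n) (n : ℤ) : F (n + 1) × G n →ₗ[K] F (n + 1 + 1) × G (n + 1) :=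
  (-(dF (n + 1) ∘ₗ LinearMap.fst K _ _)).prod ((f (n + 1)).coprod (dG n))

/-- Acyclicity of the mapping cone of `f`: every cycle is a boundary. -/
def ConeAcyclic (dF : (n : ℤ) → F n →ₗ[K] F (n + 1)) (dG : (n : ℤ) → G n →ₗ[K] G (n + 1))
    (f : (n : ℤ) → F n →ₗ[K] G n) : Prop :=
  ∀ n, LinearMap.ker (coneD dF dG f (n + 1)) ≤ LinearMap.range (coneD dF dG f n)

variable {dF : (n : ℤ) → F n →ₗ[K] F (n + 1)} {dG : (n : ℤ) → G n →ₗ[K] G (n + 1)}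
  {f : (n : ℤ) → F n →ₗ[K] G n}
  {dF' : (n : ℤ) → F' n →ₗ[K] F' (n + 1)} {dG' : (n : ℤ) → G' n →ₗ[K] G' (n + 1)}
  {f' : (n : ℤ) → F' n →ₗ[K] G' n}

lemma coneD_apply (n : ℤ) (z : F (n + 1) × G n) :
    coneD dF dG f n z = (-dF (n + 1) z.1, f (n + 1) z.1 + dG n z.2) := rfl

lemma coneD_coneD (hF : ∀ n x, dF (n + 1) (dF n x) = 0) (hG : ∀ n y, dG (n + 1) (dG n y) = 0)
    (hf : ∀ n x, f (n + 1) (dF n x) = dG n (f n x)) (n : ℤ) (z : F (n + 1) × G n) :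
    coneD dF dG f (n + 1) (coneD dF dG f n z) = 0 := by
  simp only [coneD_apply, map_neg, map_add, hF, hG, hf, neg_zero, add_zero, neg_add_cancel,
    Prod.mk_zero_zero]

lemma ConeAcyclic.inducesIso (h : ConeAcyclic dF dG f)
    (hf : ∀ n x, f (n + 1) (dF n x) = dG n (f n x)) : InducesIso K F G dF dG f := by
  rw [inducesIso_iff_bijective_homologyMap hf]
  intro n
  obtain ⟨a, rfl⟩ : ∃ a, n = a + 1 + 1 := ⟨n - 2, by ring⟩
  refine ⟨(injective_homologyMap_iff hf).2 ?_, (surjective_homologyMap_iff hf).2 ?_⟩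
  · rintro x hx ⟨y, hy⟩
    have hcycle : coneD dF dG f (a + 1) (x, -y) = 0 := by
      rw [coneD_apply, hx, map_neg, hy, neg_zero, add_neg_cancel, Prod.mk_zero_zero]
    obtain ⟨z, hz⟩ := h a hcycle
    exact ⟨-z.1, by simpa only [coneD_apply, map_neg] using congrArg Prod.fst hz⟩
  · intro y hy
    have hcycle : coneD dF dG f (a + 1 + 1) (0, y) = 0 := by
      rw [coneD_apply, map_zero, map_zero, hy, neg_zero, add_zero, Prod.mk_zero_zero]
    obtain ⟨z, hz⟩ := h (a + 1) hcycle
    obtain ⟨hx, hxy⟩ := Prod.mk.inj hz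
    refine ⟨z.1, neg_eq_zero.1 hx, -z.2, ?_⟩
    rw [map_neg, neg_eq_iff_add_eq_zero, ← hxy]
    change dG _ z.2 + (f _ z.1 - (f _ z.1 + dG _ z.2)) = 0
    abel

lemma InducesIso.coneAcyclic (h : InducesIso K F G dF dG f)
    (hf : ∀ n x, f (n + 1) (dF n x) = dG n (f n x)) : ConeAcyclic dF dG f := by
  rw [inducesIso_iff_bijective_homologyMap hf] at h
  rintro a ⟨x, y⟩ hz
  obtain ⟨hx, hxy⟩ : -dF (a + 1 + 1) x = 0 ∧ f (a + 1 + 1) x + dG (a + 1) y = 0 :=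
    Prod.mk.inj hz
  obtain ⟨v, rfl⟩ : x ∈ LinearMap.range (dF (a + 1)) :=
    (injective_homologyMap_iff hf).1 (h _).1 x (neg_eq_zero.1 hx)
      ⟨-y, by rw [map_neg]; exact (eq_neg_of_add_eq_zero_left hxy).symm⟩
  obtain ⟨v', hv', w, hw⟩ : ∃ v', dF (a + 1) v' = 0 ∧
      f (a + 1) v' - (y + f (a + 1) v) ∈ LinearMap.range (dG a) :=
    (surjective_homologyMap_iff hf).1 (h _).2 _ (by rw [map_add, ← hf, add_comm (dG _ y), hxy])
  refine ⟨(v' - v, -w), ?_⟩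
  have hy : f (a + 1) (v' - v) + dG a (-w) = y := by
    rw [map_neg, hw, map_sub]
    abel
  rw [coneD_apply, hy, map_sub, hv', zero_sub, neg_neg]

lemma ConeAcyclic.exists_tr_eq (h : ConeAcyclic dF dG f) {a b c e : ℤ} (hb : b = a + 1)
    (hc : c = b + 1) (he : e = c + 1) {x : F c} {y : G b} (hx : tr K F (c + 1) e (dF c x) = 0)
    (hxy : f c x + tr K G (b + 1) c (dG b y) = 0) :
    ∃ (v : F b) (w : G a), -tr K F (b + 1) c (dF b v) = x ∧
      f b v + tr K G (a + 1) b (dG a w) = y := by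
  subst hb hc he
  simp only [tr_self] at hx hxy ⊢
  obtain ⟨⟨v, w⟩, hvw⟩ := h a
    (show coneD dF dG f (a + 1) (x, y) = 0 by
      rw [coneD_apply, hx, hxy, neg_zero, Prod.mk_zero_zero])
  exact ⟨v, w, Prod.mk.inj hvw⟩

lemma ConeAcyclic.of_linearEquiv (h : ConeAcyclic dF dG f) (φ : ∀ n, F n ≃ₗ[K] F' n)
    (γ : ∀ n, G n ≃ₗ[K] G' n) (hφ : ∀ n x, φ (n + 1) (dF n x) = dF' n (φ n x))
    (hγ : ∀ n y, γ (n + 1) (dG n y) = dG' n (γ n y)) (hff' : ∀ n x, γ n (f n x) = f' n (φ n x)) :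
    ConeAcyclic dF' dG' f' := by
  intro n z' hz'
  let ψ (n : ℤ) : (F (n + 1) × G n) ≃ₗ[K] (F' (n + 1) × G' n) := (φ (n + 1)).prodCongr (γ n)
  have hψ (n : ℤ) (z) : ψ (n + 1) (coneD dF dG f n z) = coneD dF' dG' f' n (ψ n z) := by
    simp only [ψ, coneD_apply, LinearEquiv.prodCongr_apply, map_neg, map_add, hφ, hγ, hff']
  obtain ⟨z, rfl⟩ := (ψ (n + 1)).surjective z'
  rw [LinearMap.mem_ker, ← hψ, LinearEquiv.map_eq_zero_iff] at hz'
  obtain ⟨w, rfl⟩ := h n hz'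
  exact ⟨ψ n w, (hψ n w).symm⟩

end Cone

section Finsum

variable {M : Type*} [AddCommMonoid M]

lemma finsum_finsum_eq_finsum_sum_antidiagonal (f : ℕ → ℕ → M)
    (hf : (Function.support (Function.uncurry f)).Finite) :
    ∑ᶠ (i) (j), f i j = ∑ᶠ l, ∑ p ∈ antidiagonal l, f p.1 p.2 := by
  classical
  let s := hf.toFinset
  have hs {p : ℕ × ℕ} (hp : p ∉ s) : f p.1 p.2 = 0 := by
    simpa only [s, Set.Finite.mem_toFinset, Function.notMem_support, Function.uncurry] using hp
  have hmaps : ∀ p ∈ s, p.1 + p.2 ∈ s.image fun p => p.1 + p.2 :=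
    fun _ => mem_image_of_mem _
  have hfiber (l : ℕ) :
      ∑ p ∈ s with p.1 + p.2 = l, f p.1 p.2 = ∑ p ∈ antidiagonal l, f p.1 p.2 := by
    refine sum_subset (fun p hp => mem_antidiagonal.2 (mem_filter.1 hp).2) fun p hp hps => hs ?_
    exact fun h => hps (mem_filter.2 ⟨h, mem_antidiagonal.1 hp⟩)
  have hsupport : (Function.support fun l => ∑ p ∈ antidiagonal l, f p.1 p.2) ⊆
      s.image fun p => p.1 + p.2 := by
    intro l hl
    obtain ⟨p, hp, hfp⟩ := exists_ne_zero_of_sum_ne_zero hl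
    rw [← mem_antidiagonal.1 hp]
    exact hmaps p (not_imp_comm.1 hs hfp)
  calc ∑ᶠ (i) (j), f i j = ∑ᶠ p, Function.uncurry f p := (finsum_curry _ hf).symm
    _ = ∑ p ∈ s, f p.1 p.2 := finsum_eq_sum _ hf
    _ = ∑ l ∈ s.image fun p => p.1 + p.2, ∑ p ∈ antidiagonal l, f p.1 p.2 := by
      rw [← sum_fiberwise_of_maps_to hmaps]
      exact sum_congr rfl fun l _ => hfiber l
    _ = ∑ᶠ l, ∑ p ∈ antidiagonal l, f p.1 p.2 :=
      (finsum_eq_sum_of_support_subset _ hsupport).symm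

lemma finsum_sub_eq_sum_antidiagonal (f : ℕ → ℤ → M) (hf : ∀ i j, j < 0 → f i j = 0) (k : ℕ) :
    ∑ᶠ i : ℕ, f i (k - i) = ∑ p ∈ antidiagonal k, f p.1 p.2 := by
  rw [Finset.Nat.sum_antidiagonal_eq_sum_range_succ fun i j => f i j,
    finsum_eq_sum_of_support_subset (s := range (k + 1))]
  · refine sum_congr rfl fun i hi => ?_
    rw [Nat.cast_sub (mem_range_succ_iff.1 hi)]
  · intro i hi
    by_contra hik
    exact hi (hf i _ (by simpa using hik))

end Finsum

section Laurent

variable {K : Type} [CommRing K]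
  {C : ℤ → Type} [∀ n, AddCommGroup (C n)] [∀ n, Module K (C n)]
  {D : ℤ → Type} [∀ n, AddCommGroup (D n)] [∀ n, Module K (D n)]
  {E : ℤ → Type} [∀ n, AddCommGroup (E n)] [∀ n, Module K (E n)]

lemma uExt_uExt_coe_apply {e e' : ℤ}
    (F : (i : ℕ) → (m : ℤ) → C m →ₗ[K] D (m + e - 2 * (i : ℤ)))
    (G : (i : ℕ) → (m : ℤ) → D m →ₗ[K] E (m + e' - 2 * (i : ℤ))) {n n' : ℤ} (h : n + e = n')
    (t : ℤ) (x : PerCyc K C n) (k : ℤ) :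
    (uExt K D E e' G n' t (uExt K C D e F n n' x)).1 k =
      ∑ᶠ l : ℕ, ∑ p ∈ antidiagonal l,
        tr K E (n - 2 * (k - l) + e - 2 * p.2 + e' - 2 * p.1) (t - 2 * k)
          (G p.1 _ (F p.2 _ (x.1 (k - l)))) := by
  subst h
  let f (i j : ℕ) : E (t - 2 * k) :=
    tr K E (n - 2 * (k - (i + j)) + e - 2 * j + e' - 2 * i) (t - 2 * k)
      (G i _ (F j _ (x.1 (k - (i + j)))))
  have hf : (Function.support (Function.uncurry f)).Finite := by
    obtain ⟨N, hN⟩ := x.2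
    refine ((natle_finite (k - N)).prod (natle_finite (k - N))).subset fun p hp => ?_
    contrapose! hp
    have hlt : k - (p.1 + p.2) < N := by
      simp only [Set.mem_prod, Set.mem_ofPred_eq] at hp
      omega
    simp only [Function.notMem_support, Function.uncurry, f, hN _ hlt, map_zero]
  have hcoeff : (uExt K D E e' G (n + e) t (uExt K C D e F n (n + e) x)).1 k =
      ∑ᶠ (i) (j), f i j := by
    rw [uExt_coe_apply]
    refine finsum_congr fun i => ?_
    rw [uExt_coe_apply, ← LinearMap.comp_apply,
      map_finsum _ (uExt_sf K C D e F n (n + e) x (k - i))]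
    refine finsum_congr fun j => ?_
    rw [LinearMap.comp_apply, tr_map_tr (φ := fun m => m + e' - 2 * (i : ℤ)) (G i) (by ring),
      sub_sub]
  rw [hcoeff, finsum_finsum_eq_finsum_sum_antidiagonal f hf]
  refine finsum_congr fun l => sum_congr rfl fun p hp => ?_
  rw [← mem_antidiagonal.1 hp, Nat.cast_add]

lemma uExt_coe_apply_of_mem_uPow {e : ℤ}
    (F : (i : ℕ) → (m : ℤ) → C m →ₗ[K] D (m + e - 2 * (i : ℤ))) {n p : ℤ} (t : ℤ)
    {x : PerCyc K C n} (hx : x ∈ uPow K C p n) :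
    (uExt K C D e F n t x).1 p =
      tr K D (n - 2 * p + e - 2 * ((0 : ℕ) : ℤ)) (t - 2 * p) (F 0 (n - 2 * p) (x.1 p)) := by
  have hp : p - ((0 : ℕ) : ℤ) = p := sub_zero p
  rw [uExt_coe_apply, finsum_eq_single _ 0, hp]
  intro i hi
  rw [hx (p - i) (by omega), map_zero, map_zero]

lemma uExt_coe_apply_natCast {e : ℤ}
    (F : (i : ℕ) → (m : ℤ) → C m →ₗ[K] D (m + e - 2 * (i : ℤ))) {n : ℤ} (t : ℤ)
    {x : PerCyc K C n} (hx : x ∈ uPow K C 0 n) (k : ℕ) :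
    (uExt K C D e F n t x).1 k = nExt K C D e F n t (fun j => x.1 j) k := by
  refine finsum_sub_eq_sum_antidiagonal
    (fun i j => tr K D (n - 2 * j + e - 2 * i) (t - 2 * k) (F i _ (x.1 j))) (fun i j hj => ?_) k
  rw [hx j hj, map_zero, map_zero]

lemma mem_uPow_succ_iff {n p : ℤ} {x : PerCyc K C n} :
    x ∈ uPow K C (p + 1) n ↔ x ∈ uPow K C p n ∧ x.1 p = 0 := by
  refine ⟨fun hx => ⟨fun i hi => hx i (by omega), hx p (by omega)⟩, fun ⟨hx, hp⟩ i hi => ?_⟩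
  obtain hi | rfl := (Int.lt_add_one_iff.1 hi).lt_or_eq
  exacts [hx i hi, hp]

lemma uPow_anti {n p q : ℤ} (h : p ≤ q) : uPow K C q n ≤ uPow K C p n :=
  fun _ hx i hi => hx i (hi.trans_le h)

lemma exists_mem_uPow_coe_eq (n p : ℤ) (c : C (n - 2 * p)) :
    ∃ x ∈ uPow K C p n, x.1 p = c :=
  have hzero : ∀ i < p, (Pi.single p c : (i : ℤ) → C (n - 2 * i)) i = 0 :=
    fun _ hi => Pi.single_eq_of_ne hi.ne _
  ⟨⟨Pi.single p c, p, hzero⟩, hzero, Pi.single_eq_same _ _⟩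

lemma eq_zero_of_forall_mem_uPow {m n : ℤ} {x : PerCyc K C n}
    (hx : ∀ p : ℕ, x ∈ uPow K C (m + p) n) : x = 0 :=
  Subtype.ext <| funext fun i => hx (i - m + 1).toNat i (by omega)

lemma isCompleteFiltration_uPow (m n : ℤ) :
    IsCompleteFiltration fun p : ℕ => uPow K C (m + p) n := by
  intro s hs
  have hmono (p q : ℕ) (hpq : p ≤ q) : s q - s p ∈ uPow K C (m + p) n := by
    induction q, hpq using Nat.le_induction with
    | base => exact sub_self (s p) ▸ zero_mem _
    | succ q hpq ih =>
      rw [← sub_add_sub_cancel]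
      exact add_mem (uPow_anti (by omega) (hs q)) ih
  have hcoeff (p q : ℕ) (i : ℤ) (hp : i < m + p) (hq : i < m + q) : (s p).1 i = (s q).1 i := by
    obtain hpq | hqp := le_total p q
    · exact (sub_eq_zero.1 (hmono p q hpq i hp)).symm
    · exact sub_eq_zero.1 (hmono q p hqp i hq)
  let l (i : ℤ) : C (n - 2 * i) := (s (i - m + 1).toNat).1 i
  have hl (p : ℕ) (i : ℤ) (hi : i < m + p) : l i = (s p).1 i :=
    hcoeff _ p i (by omega) hi
  obtain ⟨N, hN⟩ := (s 0).2
  refine ⟨⟨l, min m N, fun i hi => ?_⟩, fun p i hi => sub_eq_zero.2 (hl p i hi)⟩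
  rw [hl 0 i (by omega), hN i (by omega)]

end Laurent

section S1Complex

variable {K : Type} [CommRing K]
  {C : ℤ → Type} [∀ n, AddCommGroup (C n)] [∀ n, Module K (C n)]
  {D : ℤ → Type} [∀ n, AddCommGroup (D n)] [∀ n, Module K (D n)]
  {S : S1Struct K C} {T : S1Struct K D}

lemma S1Struct.sum_antidiagonal_tr_eq_zero (S : S1Struct K C) (l : ℕ) (n t : ℤ) (x : C n) :
    ∑ p ∈ antidiagonal l, tr K C (n + 1 - 2 * (p.2 : ℤ) + 1 - 2 * (p.1 : ℤ)) t
      (S.δ p.1 _ (S.δ p.2 n x)) = 0 := by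
  rw [← map_zero (tr K C (n + 2 - 2 * l) t), ← S.rel l n x, map_sum]
  refine sum_congr rfl fun p hp => (tr_tr ?_ _ _).symm
  have := mem_antidiagonal.1 hp
  omega

lemma S1Map.sum_antidiagonal_tr_comm (κ : S1Map K C D S T) (l : ℕ) (n t : ℤ) (x : C n) :
    ∑ p ∈ antidiagonal l, tr K D (n + 1 - 2 * (p.2 : ℤ) - 2 * (p.1 : ℤ)) t
        (κ.κ p.1 _ (S.δ p.2 n x)) =
      ∑ p ∈ antidiagonal l, tr K D (n - 2 * (p.2 : ℤ) + 1 - 2 * (p.1 : ℤ)) t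
        (T.δ p.1 _ (κ.κ p.2 n x)) := by
  rw [← Finset.Nat.sum_antidiagonal_swap (n := l)
      (f := fun p => tr K D (n - 2 * (p.2 : ℤ) + 1 - 2 * (p.1 : ℤ)) t (T.δ p.1 _ (κ.κ p.2 n x))),
    ← sub_eq_zero, ← sum_sub_distrib, ← map_zero (tr K D (n + 1 - 2 * l) t), ← κ.rel l n x,
    map_sum]
  refine sum_congr rfl fun p hp => ?_
  have := mem_antidiagonal.1 hp
  rw [map_sub, tr_tr (by omega), tr_tr (by omega)]
  rfl

variable (κ : S1Map K C D S T)

lemma k0_d0 (n : ℤ) (x : C n) :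
    k0 K C D κ (n + 1) (d0 K C S n x) = d0 K D T n (k0 K C D κ n x) := by
  have h := κ.sum_antidiagonal_tr_comm 0 n (n + 1) x
  rw [Finset.Nat.antidiagonal_zero, sum_singleton, sum_singleton] at h
  have hκ := tr_map_tr (φ := fun m => m - 2 * ((0 : ℕ) : ℤ)) (κ.κ 0)
    (show n + 1 - 2 * ((0 : ℕ) : ℤ) = n + 1 by simp) (n + 1) (S.δ 0 n x)
  have hδ := tr_map_tr (φ := fun m => m + 1 - 2 * ((0 : ℕ) : ℤ)) (T.δ 0)
    (show n - 2 * ((0 : ℕ) : ℤ) = n by simp) (n + 1) (κ.κ 0 n x)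
  exact hκ.trans (h.trans hδ.symm)

lemma deltaPer_deltaPer (n : ℤ) (x : PerCyc K C n) :
    deltaPer K C S (n + 1) (deltaPer K C S n x) = 0 := by
  refine Subtype.ext <| funext fun k => (uExt_uExt_coe_apply S.δ S.δ rfl _ x k).trans ?_
  exact finsum_eq_zero_of_forall_eq_zero fun l => S.sum_antidiagonal_tr_eq_zero l _ _ _

lemma kappaPer_deltaPer (n : ℤ) (x : PerCyc K C n) :
    kappaPer K C D κ (n + 1) (deltaPer K C S n x) = deltaPer K D T n (kappaPer K C D κ n x) := by
  refine Subtype.ext <| funext fun k => (uExt_uExt_coe_apply S.δ _ rfl _ x k).trans <|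
    Eq.trans (finsum_congr fun l => ?_) (uExt_uExt_coe_apply _ T.δ (add_zero n) _ x k).symm
  refine Eq.trans (sum_congr rfl fun p _ => ?_) <|
    (κ.sum_antidiagonal_tr_comm l (n - 2 * (k - l)) (n + 1 - 2 * k) (x.1 (k - l))).trans <|
    sum_congr rfl fun p _ => ?_
  · exact tr_tr (by ring) _ _
  · exact (tr_map_tr (φ := fun m => m + 1 - 2 * (p.1 : ℤ)) (T.δ p.1) (by ring) _ _).symm

lemma deltaPer_coe_apply_of_mem_uPow {n p : ℤ} {x : PerCyc K C n} (hx : x ∈ uPow K C p n) :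
    (deltaPer K C S n x).1 p =
      tr K C (n - 2 * p + 1) (n + 1 - 2 * p) (d0 K C S (n - 2 * p) (x.1 p)) :=
  (uExt_coe_apply_of_mem_uPow S.δ (n + 1) hx).trans (tr_tr (by simp) _ _).symm

lemma kappaPer_coe_apply_of_mem_uPow {n p : ℤ} {x : PerCyc K C n} (hx : x ∈ uPow K C p n) :
    (kappaPer K C D κ n x).1 p = k0 K C D κ (n - 2 * p) (x.1 p) :=
  (uExt_coe_apply_of_mem_uPow _ n hx).trans (tr_tr (by simp) _ _)

lemma deltaPer_mem_uPow {m n : ℤ} {x : PerCyc K C n} (hx : x ∈ uPow K C m n) :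
    deltaPer K C S n x ∈ uPow K C m (n + 1) :=
  uExt_mem_uPow K C C 1 S.δ n (n + 1) m x hx

lemma kappaPer_mem_uPow {m n : ℤ} {x : PerCyc K C n} (hx : x ∈ uPow K C m n) :
    kappaPer K C D κ n x ∈ uPow K D m n :=
  uExt_mem_uPow K C D 0 _ n n m x hx

lemma coneD_deltaPer_mem_uPow {m n : ℤ} {z : PerCyc K C (n + 1) × PerCyc K D n}
    (hz : z ∈ (uPow K C m (n + 1)).prod (uPow K D m n)) :
    coneD (deltaPer K C S) (deltaPer K D T) (kappaPer K C D κ) n z ∈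
      (uPow K C m (n + 1 + 1)).prod (uPow K D m (n + 1)) :=
  ⟨neg_mem (deltaPer_mem_uPow hz.1), add_mem (kappaPer_mem_uPow κ hz.1) (deltaPer_mem_uPow hz.2)⟩

variable {κ}

lemma ConeAcyclic.exists_sub_coneD_mem_uPow
    (h : ConeAcyclic (d0 K C S) (d0 K D T) (k0 K C D κ)) {p n : ℤ}
    {z : PerCyc K C (n + 1 + 1) × PerCyc K D (n + 1)}
    (hz : z ∈ (uPow K C p (n + 1 + 1)).prod (uPow K D p (n + 1)))
    (hcycle : coneD (deltaPer K C S) (deltaPer K D T) (kappaPer K C D κ) (n + 1) z = 0) :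
    ∃ w ∈ (uPow K C p (n + 1)).prod (uPow K D p n),
      z - coneD (deltaPer K C S) (deltaPer K D T) (kappaPer K C D κ) n w ∈
        (uPow K C (p + 1) (n + 1 + 1)).prod (uPow K D (p + 1) (n + 1)) := by
  obtain ⟨x, y⟩ := z
  obtain ⟨hx, hy⟩ := hz
  obtain ⟨hδx, hκx⟩ := Prod.mk.inj hcycle
  have hlead₁ := congrArg (fun a => a.1 p) (neg_eq_zero.1 hδx)
  have hlead₂ := congrArg (fun a => a.1 p) hκx
  obtain ⟨v, w, hv, hw⟩ := h.exists_tr_eq (a := n - 2 * p) (b := n + 1 - 2 * p)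
    (c := n + 1 + 1 - 2 * p) (e := n + 1 + 1 + 1 - 2 * p) (by ring) (by ring) (by ring)
    (x := x.1 p) (y := y.1 p) ((deltaPer_coe_apply_of_mem_uPow hx).symm.trans hlead₁)
    ((congrArg₂ _ (kappaPer_coe_apply_of_mem_uPow κ hx)
      (deltaPer_coe_apply_of_mem_uPow hy)).symm.trans hlead₂)
  obtain ⟨v, hvmem, rfl⟩ := exists_mem_uPow_coe_eq (K := K) (n + 1) p v
  obtain ⟨w, hwmem, rfl⟩ := exists_mem_uPow_coe_eq (K := K) n p w
  have hcone := coneD_deltaPer_mem_uPow (S := S) (T := T) κ (z := (v, w)) ⟨hvmem, hwmem⟩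
  refine ⟨(v, w), ⟨hvmem, hwmem⟩, mem_uPow_succ_iff.2 ⟨sub_mem hx hcone.1, sub_eq_zero.2 ?_⟩,
    mem_uPow_succ_iff.2 ⟨sub_mem hy hcone.2, sub_eq_zero.2 ?_⟩⟩
  · exact hv.symm.trans (congrArg Neg.neg (deltaPer_coe_apply_of_mem_uPow hvmem).symm)
  · exact hw.symm.trans (congrArg₂ _ (kappaPer_coe_apply_of_mem_uPow κ hvmem)
      (deltaPer_coe_apply_of_mem_uPow hwmem)).symm

theorem ConeAcyclic.uPow (h : ConeAcyclic (d0 K C S) (d0 K D T) (k0 K C D κ)) (m : ℤ) :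
    ConeAcyclic (F := fun n => uPow K C m n) (G := fun n => uPow K D m n)
      (deltaRes K C S m) (deltaRes K D T m) (kappaRes K C D κ m) := by
  rintro n ⟨⟨x, hx⟩, ⟨y, hy⟩⟩ hz
  obtain ⟨hδx, hκx⟩ := Prod.mk.inj hz
  have hcycle : coneD (deltaPer K C S) (deltaPer K D T) (kappaPer K C D κ) (n + 1) (x, y) = 0 :=
    Prod.ext (congrArg Subtype.val hδx) (congrArg Subtype.val hκx)
  obtain ⟨⟨v, w⟩, ⟨hv, hw⟩, hvw⟩ := exists_mem_map_eq_of_isCompleteFiltration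
    (coneD_coneD (fun _ => deltaPer_deltaPer _) (fun _ => deltaPer_deltaPer _)
      (kappaPer_deltaPer κ) n)
    (fun p : ℕ => fun _ => coneD_deltaPer_mem_uPow κ (m := m + p))
    ((isCompleteFiltration_uPow m (n + 1)).prod (isCompleteFiltration_uPow m n))
    (fun z hz => Prod.ext (eq_zero_of_forall_mem_uPow fun p => (hz p).1)
      (eq_zero_of_forall_mem_uPow fun p => (hz p).2))
    (fun p z hz hcycle => by
      rw [Nat.cast_succ, ← add_assoc]
      exact h.exists_sub_coneD_mem_uPow hz hcycle)
    (b := (x, y)) (by rw [Nat.cast_zero, add_zero]; exact ⟨hx, hy⟩) hcycle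
  rw [Nat.cast_zero, add_zero] at hv hw
  obtain ⟨hx', hy'⟩ := Prod.mk.inj hvw
  exact ⟨(⟨v, hv⟩, ⟨w, hw⟩), Prod.ext (Subtype.ext hx') (Subtype.ext hy')⟩

lemma kappaRes_deltaRes (κ : S1Map K C D S T) (m n : ℤ) (x : uPow K C m n) :
    kappaRes K C D κ m (n + 1) (deltaRes K C S m n x) =
      deltaRes K D T m n (kappaRes K C D κ m n x) :=
  Subtype.ext (kappaPer_deltaPer κ n x)

end S1Complex

section NegCyc

variable {K : Type} [CommRing K]
  {C : ℤ → Type} [∀ n, AddCommGroup (C n)] [∀ n, Module K (C n)]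
  {D : ℤ → Type} [∀ n, AddCommGroup (D n)] [∀ n, Module K (D n)]
  {S : S1Struct K C} {T : S1Struct K D}

variable (K C) in
/-- The identification of the subcomplex `u⁰C⁻` of `C^∧` with the power series complex `C⁻`. -/
noncomputable def uPowZeroEquiv (n : ℤ) : uPow K C 0 n ≃ₗ[K] NegCyc C n :=
  LinearEquiv.ofBijective
    { toFun x := fun k : ℕ => x.1.1 k, map_add' _ _ := rfl, map_smul' _ _ := rfl } <| by
    refine ⟨(injective_iff_map_eq_zero _).2 fun x hx => ?_, fun v => ?_⟩
    · refine Subtype.ext <| Subtype.ext <| funext fun i => ?_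
      obtain hi | hi := lt_or_ge i 0
      · exact x.2 i hi
      · lift i to ℕ using hi
        exact congrFun hx i
    · let a : (i : ℤ) → C (n - 2 * i)
        | .ofNat k => v k
        | .negSucc _ => 0
      have ha : ∀ i < 0, a i = 0
        | .negSucc _, _ => rfl
      exact ⟨⟨⟨a, 0, ha⟩, ha⟩, rfl⟩

lemma uPowZeroEquiv_deltaRes (n : ℤ) (x : uPow K C 0 n) :
    uPowZeroEquiv K C (n + 1) (deltaRes K C S 0 n x) =
      deltaNeg K C S n (uPowZeroEquiv K C n x) :=
  funext (uExt_coe_apply_natCast S.δ (n + 1) x.2)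

lemma uPowZeroEquiv_kappaRes (κ : S1Map K C D S T) (n : ℤ) (x : uPow K C 0 n) :
    uPowZeroEquiv K D n (kappaRes K C D κ 0 n x) = kappaNeg K C D κ n (uPowZeroEquiv K C n x) :=
  funext (uExt_coe_apply_natCast
    (fun i m => tr K D (m - 2 * (i : ℤ)) (m + 0 - 2 * (i : ℤ)) ∘ₗ κ.κ i m) n x.2)

lemma kappaNeg_deltaNeg (κ : S1Map K C D S T) (n : ℤ) (x : NegCyc C n) :
    kappaNeg K C D κ (n + 1) (deltaNeg K C S n x) =
      deltaNeg K D T n (kappaNeg K C D κ n x) := by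
  obtain ⟨x, rfl⟩ := (uPowZeroEquiv K C n).surjective x
  rw [← uPowZeroEquiv_deltaRes, ← uPowZeroEquiv_kappaRes, kappaRes_deltaRes,
    uPowZeroEquiv_deltaRes, uPowZeroEquiv_kappaRes]

end NegCyc

theorem stmt7 (K : Type) [CommRing K]
    (C : ℤ → Type) [∀ n, AddCommGroup (C n)] [∀ n, Module K (C n)]
    (D : ℤ → Type) [∀ n, AddCommGroup (D n)] [∀ n, Module K (D n)]
    (S : S1Struct K C) (T : S1Struct K D) (κ : S1Map K C D S T)
    (hqis : InducesIso K C D (d0 K C S) (d0 K D T) (k0 K C D κ)) :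
    InducesIso K (NegCyc C) (NegCyc D) (deltaNeg K C S) (deltaNeg K D T) (kappaNeg K C D κ)
    ∧ ∀ m : ℤ,
      InducesIso K (fun d => ↥(uPow K C m d)) (fun d => ↥(uPow K D m d))
        (deltaRes K C S m) (deltaRes K D T m) (kappaRes K C D κ m) := by
  have hcone := (hqis.coneAcyclic (k0_d0 κ)).uPow
  refine ⟨?_, fun m => (hcone m).inducesIso (kappaRes_deltaRes κ m)⟩
  have hneg : ConeAcyclic (deltaNeg K C S) (deltaNeg K D T) (kappaNeg K C D κ) :=
    (hcone 0).of_linearEquiv (uPowZeroEquiv K C) (uPowZeroEquiv K D) uPowZeroEquiv_deltaRes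
      uPowZeroEquiv_deltaRes (uPowZeroEquiv_kappaRes κ)
  exact hneg.inducesIso (kappaNeg_deltaNeg κ)
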